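/- arXiv:2210.11104 — 4 statements merged into one kernel-verified Lean document; each statement's English description precedes it below -/
import Mathlib

section
/- Let X_1 and ε_2 be independent random variables, each uniformly distributed on [−1,1], let β ≠ 0 be a real constant, and let X_2 = βX_1 + ε_2. Define γ = max{|β|, 1/|β|}. Then (E[Var(X_1 | X_2)] · Var(X_2)) / (Var(X_1) · Var(ε_2)) = (γ² + 1)(2γ − 1) / (2γ³), where Var(X_1 | X_2) = E[(X_1 − E[X_1 | X_2])² | X_2]. -/
open MeasureTheory ProbabilityTheory
open scoped ENNReal

/-!
For independent `X` and `Y` uniform on intervals of radii `p` and `q`, the pair `(X + Y, Y)` is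
uniform on a sheared rectangle, all of whose slices over `X + Y = s` are intervals. Hence
`E[Y | X + Y]` is the midpoint of the slice, and `E[Var(Y | X + Y)]` is the integral of
`(length of slice)³ / 12` divided by the area of the rectangle. With `m = min p q` and
`M = max p q`, the slice at distance `u` from the central one has length `min (2m) (m + M - u)`,
or is empty when this is negative; so `E[Var(Y | X + Y)] = m² (2M - m) / (6M)`. The linear model
is the case `Y = β X₁`, `X = ε₂`, since `Var(β X₁ | X₂) = β² Var(X₁ | X₂)`.
-/

open Metric Set
open MeasureTheory.pdf (IsUniform)

section Uniform

variable {Ω E F : Type*} [MeasurableSpace Ω] [MeasurableSpace E] [MeasurableSpace F]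
  {μ : Measure Ω} {ν : Measure E} {ρ : Measure F} {X : Ω → E} {Y : Ω → F} {s : Set E} {t : Set F}

lemma isUniform_iff_map_eq : IsUniform X s μ ν ↔ μ.map X = (ν s)⁻¹ • ν.restrict s :=
  Iff.rfl

lemma measure_ne_zero_and_ne_top_of_isUniform [NeZero μ] (hX : AEMeasurable X μ)
    (hu : IsUniform X s μ ν) : ν s ≠ 0 ∧ ν s ≠ ∞ := by
  have hcond : ν[|s] ≠ 0 := by
    rw [← show μ.map X = ν[|s] from hu, Ne, Measure.map_eq_zero_iff hX]
    exact NeZero.ne μ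
  rwa [Ne, cond_eq_zero, not_or, and_comm] at hcond

lemma ae_mem_of_isUniform (hX : AEMeasurable X μ) (hs : MeasurableSet s)
    (hu : IsUniform X s μ ν) : ∀ᵐ ω ∂μ, X ω ∈ s := by
  refine ae_of_ae_map hX ?_
  rw [show μ.map X = ν[|s] from hu]
  exact ae_cond_mem hs

lemma setIntegral_comp_of_isUniform (hX : AEMeasurable X μ) (hu : IsUniform X s μ ν)
    {f : E → ℝ} (hf : AEStronglyMeasurable f ν) {t : Set E} (ht : MeasurableSet t) :
    ∫ ω in X ⁻¹' t, f (X ω) ∂μ = (ν.real s)⁻¹ * ∫ x in t ∩ s, f x ∂ν := by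
  rw [← setIntegral_map ht (hf.mono_ac hu.absolutelyContinuous) hX,
    isUniform_iff_map_eq.1 hu, Measure.restrict_smul, integral_smul_measure,
    Measure.restrict_restrict ht, ENNReal.toReal_inv, smul_eq_mul, measureReal_def]

lemma integral_comp_of_isUniform (hX : AEMeasurable X μ) (hu : IsUniform X s μ ν)
    {f : E → ℝ} (hf : AEStronglyMeasurable f ν) :
    ∫ ω, f (X ω) ∂μ = (ν.real s)⁻¹ * ∫ x in s, f x ∂ν := by
  simpa using setIntegral_comp_of_isUniform hX hu hf MeasurableSet.univ

lemma isUniform_comp_of_measurePreserving {g : E → F} (hg : MeasurePreserving g ν ρ)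
    (hX : AEMeasurable X μ) (ht : MeasurableSet t) (hu : IsUniform X (g ⁻¹' t) μ ν) :
    IsUniform (g ∘ X) t μ ρ := by
  rw [isUniform_iff_map_eq,
    ← AEMeasurable.map_map_of_aemeasurable hg.measurable.aemeasurable hX,
    isUniform_iff_map_eq.1 hu, Measure.map_smul,
    (hg.restrict_preimage ht).map_eq, hg.measure_preimage ht.nullMeasurableSet]

lemma isUniform_of_smul_measure {c : ℝ≥0∞} (hc₀ : c ≠ 0) (hc : c ≠ ∞)
    (hu : IsUniform X s μ (c • ν)) : IsUniform X s μ ν := by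
  rw [isUniform_iff_map_eq, isUniform_iff_map_eq.1 hu, Measure.restrict_smul,
    Measure.smul_apply, smul_smul, smul_eq_mul, ENNReal.mul_inv (.inl hc₀) (.inl hc),
    mul_right_comm, ENNReal.inv_mul_cancel hc₀ hc, one_mul]

lemma isUniform_prodMk [SFinite ν] [SFinite ρ] [IsFiniteMeasure μ] (hX : AEMeasurable X μ)
    (hY : AEMeasurable Y μ) (hindep : IndepFun X Y μ) (hs : ν s ≠ ∞) (ht : ρ t ≠ ∞)
    (huX : IsUniform X s μ ν) (huY : IsUniform Y t μ ρ) :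
    IsUniform (fun ω ↦ (X ω, Y ω)) (s ×ˢ t) μ (ν.prod ρ) := by
  rw [isUniform_iff_map_eq, (indepFun_iff_map_prod_eq_prod_map_map hX hY).1 hindep,
    isUniform_iff_map_eq.1 huX, isUniform_iff_map_eq.1 huY,
    Measure.prod_smul_left, Measure.prod_smul_right, Measure.prod_restrict, smul_smul,
    Measure.prod_prod, ENNReal.mul_inv (.inr ht) (.inl hs)]

end Uniform

section Shear

variable {G : Type*} [AddGroup G]

/-- The image of `s ×ˢ t` under the shear `(x, y) ↦ (x + y, y)`, written as a preimage under the
inverse shear. It is the support of `(X + Y, Y)` when `(X, Y)` has support `s ×ˢ t`. -/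
def shearProd (s t : Set G) : Set (G × G) :=
  (fun z ↦ (z.1 - z.2, z.2)) ⁻¹' (s ×ˢ t)

variable [MeasurableSpace G] [MeasurableAdd₂ G] [MeasurableNeg G] {s t : Set G}

lemma measurableSet_shearProd (hs : MeasurableSet s) (ht : MeasurableSet t) :
    MeasurableSet (shearProd s t) :=
  (hs.prod ht).preimage (by fun_prop)

variable {ν : Measure G} [SFinite ν] [ν.IsAddRightInvariant]

lemma measureReal_shearProd (hs : MeasurableSet s) (ht : MeasurableSet t) :
    (ν.prod ν).real (shearProd s t) = ν.real s * ν.real t := by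
  rw [measureReal_def, shearProd,
    (measurePreserving_sub_prod ν ν).measure_preimage (hs.prod ht).nullMeasurableSet,
    Measure.prod_prod, ENNReal.toReal_mul, measureReal_def, measureReal_def]

lemma isUniform_add_prodMk {Ω : Type*} [MeasurableSpace Ω] {μ : Measure Ω} [IsFiniteMeasure μ]
    [NeZero μ] {X Y : Ω → G} (hX : AEMeasurable X μ) (hY : AEMeasurable Y μ)
    (hindep : IndepFun X Y μ) (hs : MeasurableSet s) (ht : MeasurableSet t)
    (huX : IsUniform X s μ ν) (huY : IsUniform Y t μ ν) :
    IsUniform (fun ω ↦ (X ω + Y ω, Y ω)) (shearProd s t) μ (ν.prod ν) := by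
  have hprod : IsUniform (fun ω ↦ (X ω, Y ω)) (s ×ˢ t) μ (ν.prod ν) :=
    isUniform_prodMk hX hY hindep (measure_ne_zero_and_ne_top_of_isUniform hX huX).2
      (measure_ne_zero_and_ne_top_of_isUniform hY huY).2 huX huY
  have hpre : (fun z : G × G ↦ (z.1 + z.2, z.2)) ⁻¹' shearProd s t = s ×ˢ t := by
    ext z
    simp [shearProd]
  exact isUniform_comp_of_measurePreserving (measurePreserving_add_prod ν ν) (hX.prodMk hY)
    (measurableSet_shearProd hs ht) (by rwa [hpre])

end Shear

section Slices

lemma setIntegral_prod_eq_integral_slices {α β E : Type*} [MeasurableSpace α] [MeasurableSpace β]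
    [NormedAddCommGroup E] [NormedSpace ℝ E] {ν : Measure α} {ρ : Measure β} [SFinite ν]
    [SFinite ρ] {R : Set (α × β)} (hR : MeasurableSet R) {f : α × β → E}
    (hf : IntegrableOn f R (ν.prod ρ)) (T : Set α) :
    ∫ z in Prod.fst ⁻¹' T ∩ R, f z ∂ν.prod ρ =
      ∫ y in T, ∫ x in Prod.mk y ⁻¹' R, f (y, x) ∂ρ ∂ν := by
  have hfT : Integrable (R.indicator f) ((ν.restrict T).prod ρ) := by
    rw [Measure.restrict_prod_eq_prod_univ]
    exact ((integrable_indicator_iff hR).2 hf).restrict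
  calc ∫ z in Prod.fst ⁻¹' T ∩ R, f z ∂ν.prod ρ
      = ∫ z, R.indicator f z ∂(ν.restrict T).prod ρ := by
        rw [Measure.restrict_prod_eq_prod_univ, Set.prod_univ, setIntegral_indicator hR]
    _ = ∫ y in T, ∫ x, R.indicator f (y, x) ∂ρ ∂ν := integral_prod _ hfT
    _ = ∫ y in T, ∫ x in Prod.mk y ⁻¹' R, f (y, x) ∂ρ ∂ν := by
        congr with y
        rw [← integral_indicator (hR.preimage measurable_prodMk_left)]
        rfl

lemma integral_Icc_sub_midpoint (a b : ℝ) : ∫ x in Icc a b, (x - (a + b) / 2) = 0 := by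
  rcases le_or_gt a b with hab | hab
  · rw [integral_Icc_eq_integral_Ioc, ← intervalIntegral.integral_of_le hab,
      intervalIntegral.integral_comp_sub_right (fun x ↦ x), integral_id]
    ring
  · simp [Icc_eq_empty hab.not_ge]

lemma integral_Icc_sub_midpoint_sq (a b : ℝ) :
    ∫ x in Icc a b, (x - (a + b) / 2) ^ 2 = max (b - a) 0 ^ 3 / 12 := by
  rcases le_or_gt a b with hab | hab
  · rw [integral_Icc_eq_integral_Ioc, ← intervalIntegral.integral_of_le hab,
      intervalIntegral.integral_comp_sub_right (fun x ↦ x ^ 2), integral_pow,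
      max_eq_left (sub_nonneg.2 hab)]
    ring
  · simp [Icc_eq_empty hab.not_ge, max_eq_right (sub_nonpos.2 hab.le)]

lemma midpoint_mem_of_mem_Icc_subset {a b c d x : ℝ} (hsub : Icc a b ⊆ Icc c d)
    (hx : x ∈ Icc a b) : (a + b) / 2 ∈ Icc c d := by
  have hab : a ≤ b := hx.1.trans hx.2
  exact hsub ⟨by linarith, by linarith⟩

/-- The region `{(y, x) | a y ≤ x ≤ b y}`, whose slice over `y` is the interval `[a y, b y]`; it
differs from Mathlib's `regionBetween` in having closed slices over the whole base. -/
def closedRegionBetween {α : Type*} (a b : α → ℝ) : Set (α × ℝ) :=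
  {z | z.2 ∈ Icc (a z.1) (b z.1)}

variable {Ω α : Type*} [MeasurableSpace Ω] [MeasurableSpace α] {a b : α → ℝ}

lemma measurableSet_closedRegionBetween (ha : Measurable a) (hb : Measurable b) :
    MeasurableSet (closedRegionBetween a b) :=
  (measurableSet_le (ha.comp measurable_fst) measurable_snd).inter
    (measurableSet_le measurable_snd (hb.comp measurable_fst))

variable {μ : Measure Ω} [NeZero μ] {ν : Measure α} [SFinite ν]
  {X : Ω → ℝ} {Y : Ω → α} {c d : ℝ}

lemma setIntegral_sub_midpoint_pow_of_isUniform (hX : AEMeasurable X μ) (hY : AEMeasurable Y μ)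
    (ha : Measurable a) (hb : Measurable b) (hsub : ∀ y, Icc (a y) (b y) ⊆ Icc c d)
    (hu : IsUniform (fun ω ↦ (Y ω, X ω)) (closedRegionBetween a b) μ (ν.prod volume))
    (n : ℕ) {T : Set α} (hT : MeasurableSet T) :
    ∫ ω in Y ⁻¹' T, (X ω - (a (Y ω) + b (Y ω)) / 2) ^ n ∂μ =
      ((ν.prod volume).real (closedRegionBetween a b))⁻¹ *
        ∫ y in T, (∫ x in Icc (a y) (b y), (x - (a y + b y) / 2) ^ n) ∂ν := by
  set f : α × ℝ → ℝ := fun z ↦ (z.2 - (a z.1 + b z.1) / 2) ^ n with hf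
  have hfm : Measurable f := by fun_prop
  have hR : MeasurableSet (closedRegionBetween a b) := measurableSet_closedRegionBetween ha hb
  have hYX : AEMeasurable (fun ω ↦ (Y ω, X ω)) μ := hY.prodMk hX
  have hf_bound : ∀ z ∈ closedRegionBetween a b, ‖f z‖ ≤ (d - c) ^ n := by
    intro z hz
    have hx := hsub z.1 hz
    have hmid := midpoint_mem_of_mem_Icc_subset (hsub z.1) hz
    rw [hf, norm_pow, Real.norm_eq_abs]
    gcongr
    rw [abs_le]
    constructor <;> linarith [hx.1, hx.2, hmid.1, hmid.2]
  have hf_int : IntegrableOn f (closedRegionBetween a b) (ν.prod volume) :=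
    Measure.integrableOn_of_bounded (measure_ne_zero_and_ne_top_of_isUniform hYX hu).2
      hfm.aestronglyMeasurable (ae_restrict_of_forall_mem hR hf_bound)
  have hlaw := setIntegral_comp_of_isUniform hYX hu hfm.aestronglyMeasurable (measurable_fst hT)
  rwa [setIntegral_prod_eq_integral_slices hR hf_int] at hlaw

variable [IsFiniteMeasure μ]

lemma condExp_ae_eq_midpoint_of_isUniform (hX : AEMeasurable X μ) (hY : Measurable Y)
    (ha : Measurable a) (hb : Measurable b) (hsub : ∀ y, Icc (a y) (b y) ⊆ Icc c d)
    (hu : IsUniform (fun ω ↦ (Y ω, X ω)) (closedRegionBetween a b) μ (ν.prod volume)) :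
    μ[X | MeasurableSpace.comap Y inferInstance] =ᵐ[μ] fun ω ↦ (a (Y ω) + b (Y ω)) / 2 := by
  have hmem : ∀ᵐ ω ∂μ, X ω ∈ Icc (a (Y ω)) (b (Y ω)) :=
    ae_mem_of_isUniform (hY.aemeasurable.prodMk hX) (measurableSet_closedRegionBetween ha hb) hu
  have hX_int : Integrable X μ :=
    .of_mem_Icc c d hX (hmem.mono fun ω hω ↦ hsub _ hω)
  have hmid_int : Integrable (fun ω ↦ (a (Y ω) + b (Y ω)) / 2) μ :=
    .of_mem_Icc c d (by fun_prop)
      (hmem.mono fun ω hω ↦ midpoint_mem_of_mem_Icc_subset (hsub _) hω)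
  refine (ae_eq_condExp_of_forall_setIntegral_eq hY.comap_le hX_int
    (fun _ _ _ ↦ hmid_int.integrableOn) ?_ ?_).symm
  · rintro _ ⟨T, hT, rfl⟩ -
    have hzero := setIntegral_sub_midpoint_pow_of_isUniform hX hY.aemeasurable ha hb hsub hu 1 hT
    simp only [pow_one, integral_Icc_sub_midpoint, integral_zero, mul_zero] at hzero
    rw [integral_sub hX_int.integrableOn hmid_int.integrableOn, sub_eq_zero] at hzero
    exact hzero.symm
  · exact (((ha.add hb).div_const 2).comp (comap_measurable Y)).stronglyMeasurable
      |>.aestronglyMeasurable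

lemma integral_condVar_of_isUniform (hX : AEMeasurable X μ) (hY : Measurable Y)
    (ha : Measurable a) (hb : Measurable b) (hsub : ∀ y, Icc (a y) (b y) ⊆ Icc c d)
    (hu : IsUniform (fun ω ↦ (Y ω, X ω)) (closedRegionBetween a b) μ (ν.prod volume)) :
    ∫ ω, Var[X; μ | MeasurableSpace.comap Y inferInstance] ω ∂μ =
      ((ν.prod volume).real (closedRegionBetween a b))⁻¹ *
        ∫ y, max (b y - a y) 0 ^ 3 / 12 ∂ν := by
  have hcond := condExp_ae_eq_midpoint_of_isUniform hX hY ha hb hsub hu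
  calc ∫ ω, Var[X; μ | MeasurableSpace.comap Y inferInstance] ω ∂μ
      = ∫ ω, (X ω - (a (Y ω) + b (Y ω)) / 2) ^ 2 ∂μ := by
        rw [condVar, integral_condExp hY.comap_le]
        exact integral_congr_ae (hcond.mono fun ω hω ↦ by simp [hω])
    _ = _ := by
        simpa [integral_Icc_sub_midpoint_sq] using setIntegral_sub_midpoint_pow_of_isUniform hX
          hY.aemeasurable ha hb hsub hu 2 MeasurableSet.univ

end Slices

section Overlap

lemma min_add_sub_max_sub_eq (c p s q : ℝ) :
    min (c + p) (s + q) - max (c - p) (s - q) =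
      min (2 * min p q) (min p q + max p q - |s - c|) := by
  grind

lemma integral_max_min_sub_abs_pow_three {m M : ℝ} (hm : 0 ≤ m) (hmM : m ≤ M) :
    ∫ u : ℝ, max (min (2 * m) (m + M - |u|)) 0 ^ 3 = 8 * m ^ 3 * (2 * M - m) := by
  set f : ℝ → ℝ := fun u ↦ max (min (2 * m) (m + M - u)) 0 ^ 3 with hf
  have hint (a b : ℝ) : IntervalIntegrable f volume a b :=
    Continuous.intervalIntegrable (by fun_prop) a b
  have htail : ∫ u in Ioi 0, f u = ∫ u in (0)..(m + M), f u := by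
    rw [intervalIntegral.integral_of_le (by linarith)]
    refine setIntegral_eq_of_subset_of_forall_sdiff_eq_zero measurableSet_Ioi
      Ioc_subset_Ioi_self fun u hu ↦ ?_
    have : m + M < u := by
      by_contra! hle
      exact hu.2 ⟨hu.1, hle⟩
    grind
  have hplateau : ∫ u in (0)..(M - m), f u = ∫ u in (0)..(M - m), (2 * m) ^ 3 := by
    refine intervalIntegral.integral_congr fun u hu ↦ ?_
    rw [uIcc_of_le (by linarith)] at hu
    have hmin : min (2 * m) (m + M - u) = 2 * m := min_eq_left (by linarith [hu.2])
    simp only [hf, hmin, max_eq_left (show 0 ≤ 2 * m by linarith)]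
  have hslope : ∫ u in (M - m)..(m + M), f u = ∫ u in (M - m)..(m + M), (m + M - u) ^ 3 := by
    refine intervalIntegral.integral_congr fun u hu ↦ ?_
    rw [uIcc_of_le (by linarith)] at hu
    have hmin : min (2 * m) (m + M - u) = m + M - u := min_eq_right (by linarith [hu.1])
    simp only [hf, hmin, max_eq_left (show 0 ≤ m + M - u by linarith [hu.2])]
  calc ∫ u : ℝ, f |u|
      = 2 * ((∫ u in (0)..(M - m), f u) + ∫ u in (M - m)..(m + M), f u) := by
        rw [integral_comp_abs, htail,
          intervalIntegral.integral_add_adjacent_intervals (hint _ _) (hint _ _)]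
    _ = 2 * ((M - m) * (2 * m) ^ 3 + (2 * m) ^ 4 / 4) := by
        rw [hplateau, hslope, intervalIntegral.integral_const,
          intervalIntegral.integral_comp_sub_left (fun x ↦ x ^ 3), integral_pow, smul_eq_mul]
        ring
    _ = 8 * m ^ 3 * (2 * M - m) := by ring

end Overlap

section Interval

variable {Ω : Type*} [MeasurableSpace Ω] {μ : Measure Ω} {X Y : Ω → ℝ} {c d p q : ℝ}

lemma radius_pos_of_isUniform_closedBall [NeZero μ] (hX : AEMeasurable X μ)
    (hu : IsUniform X (closedBall c p) μ) : 0 < p := by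
  simpa using (measure_ne_zero_and_ne_top_of_isUniform hX hu).1

lemma memLp_of_isUniform_closedBall [IsFiniteMeasure μ] (hX : AEMeasurable X μ)
    (hu : IsUniform X (closedBall c p) μ) (r : ℝ≥0∞) : MemLp X r μ := by
  rw [Real.closedBall_eq_Icc] at hu
  exact memLp_of_bounded (ae_mem_of_isUniform hX measurableSet_Icc hu) hX.aestronglyMeasurable r

lemma variance_of_isUniform_closedBall [IsProbabilityMeasure μ] (hX : AEMeasurable X μ)
    (hu : IsUniform X (closedBall c p) μ) : Var[X; μ] = p ^ 2 / 3 := by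
  have hp : 0 < p := radius_pos_of_isUniform_closedBall hX hu
  have hX_int : Integrable X μ :=
    memLp_one_iff_integrable.1 (memLp_of_isUniform_closedBall hX hu 1)
  have hcenter : (c - p + (c + p)) / 2 = c := by ring
  rw [Real.closedBall_eq_Icc] at hu
  have hmean : μ[X] = c := by
    have hzero : ∫ ω, (X ω - c) ∂μ = 0 := by
      have hfirst := integral_Icc_sub_midpoint (c - p) (c + p)
      rw [hcenter] at hfirst
      rw [integral_comp_of_isUniform (f := fun x ↦ x - c) hX hu (by fun_prop), hfirst, mul_zero]
    rwa [integral_sub hX_int (integrable_const c), integral_const, probReal_univ, one_smul,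
      sub_eq_zero] at hzero
  have hsq := integral_Icc_sub_midpoint_sq (c - p) (c + p)
  rw [hcenter, max_eq_left (by linarith)] at hsq
  rw [variance_eq_integral hX, hmean,
    integral_comp_of_isUniform (f := fun x ↦ (x - c) ^ 2) hX hu (by fun_prop), hsq,
    Real.volume_real_Icc_of_le (by linarith)]
  field

lemma isUniform_const_mul_closedBall {β : ℝ} (hβ : β ≠ 0) (hX : AEMeasurable X μ)
    (hu : IsUniform X (closedBall c p) μ) :
    IsUniform (fun ω ↦ β * X ω) (closedBall (β * c) (|β| * p)) μ := by
  have hscale : MeasurePreserving (β * ·) volume (ENNReal.ofReal |β⁻¹| • volume) :=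
    ⟨by fun_prop, Real.map_volume_mul_left hβ⟩
  have hpre : (β * ·) ⁻¹' closedBall (β * c) (|β| * p) = closedBall c p := by
    ext x
    simp [Real.dist_eq, ← mul_sub, abs_mul, hβ]
  exact isUniform_of_smul_measure (by simpa using hβ) ENNReal.ofReal_ne_top
    (isUniform_comp_of_measurePreserving hscale hX measurableSet_closedBall (by rwa [hpre]))

lemma shearProd_closedBall (c p d q : ℝ) :
    shearProd (closedBall c p) (closedBall d q) =
      closedRegionBetween (fun s ↦ max (d - q) (s - c - p)) (fun s ↦ min (d + q) (s - c + p)) := by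
  ext z
  simp only [shearProd, closedRegionBetween, Real.closedBall_eq_Icc, mem_preimage, mem_prod,
    mem_Icc, mem_ofPred_eq, max_le_iff, le_min_iff]
  grind

theorem integral_condVar_add_of_isUniform_closedBall [IsFiniteMeasure μ] [NeZero μ]
    (hX : Measurable X) (hY : Measurable Y) (hindep : IndepFun X Y μ)
    (huX : IsUniform X (closedBall c p) μ) (huY : IsUniform Y (closedBall d q) μ) :
    ∫ ω, Var[Y; μ | MeasurableSpace.comap (fun ω ↦ X ω + Y ω) inferInstance] ω ∂μ =
      min q p ^ 2 * (2 * max q p - min q p) / (6 * max q p) := by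
  have hp : 0 < p := radius_pos_of_isUniform_closedBall hX.aemeasurable huX
  have hq : 0 < q := radius_pos_of_isUniform_closedBall hY.aemeasurable huY
  have hm : 0 < min q p := lt_min hq hp
  have hM : 0 < max q p := hq.trans_le (le_max_left q p)
  have hXY : Measurable fun ω ↦ X ω + Y ω := hX.add hY
  have harea := measureReal_shearProd (ν := volume) (s := closedBall c p) (t := closedBall d q)
    measurableSet_closedBall measurableSet_closedBall
  have hjoint := isUniform_add_prodMk hX.aemeasurable hY.aemeasurable hindep
    measurableSet_closedBall measurableSet_closedBall huX huY
  have hsub (s : ℝ) : Icc (max (d - q) (s - c - p)) (min (d + q) (s - c + p)) ⊆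
      Icc (d - q) (d + q) := Icc_subset_Icc (le_max_left _ _) (min_le_left _ _)
  have hslices :
      ∫ s, max (min (d + q) (s - c + p) - max (d - q) (s - c - p)) 0 ^ 3 / 12 =
        8 * min q p ^ 3 * (2 * max q p - min q p) / 12 := by
    simp_rw [integral_div, min_add_sub_max_sub_eq, sub_sub]
    rw [integral_sub_right_eq_self
        (fun u ↦ max (min (2 * min q p) (min q p + max q p - |u|)) 0 ^ 3),
      integral_max_min_sub_abs_pow_three hm.le min_le_max]
  rw [shearProd_closedBall] at harea hjoint
  rw [integral_condVar_of_isUniform hY.aemeasurable hXY (by fun_prop) (by fun_prop) hsub hjoint,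
    hslices, harea, Real.volume_real_closedBall hp.le, Real.volume_real_closedBall hq.le,
    mul_mul_mul_comm, mul_comm p, ← min_mul_max q p]
  field [hM]

end Interval

lemma max_div_div_eq_max_div_min {P q : ℝ} (hP : 0 < P) (hq : 0 < q) :
    max (P / q) (q / P) = max P q / min P q := by
  rcases le_total P q with h | h
  · rw [max_eq_right h, min_eq_left h, max_eq_right (by gcongr)]
  · rw [max_eq_left h, min_eq_right h, max_eq_left (by gcongr)]

lemma min_max_variance_ratio_eq {P q : ℝ} (hP : 0 < P) (hq : 0 < q) {γ : ℝ}
    (hγ : γ = max (P / q) (q / P)) :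
    min P q ^ 2 * (2 * max P q - min P q) / (6 * max P q) * ((P ^ 2 + q ^ 2) / 3) /
      (P ^ 2 / 3 * (q ^ 2 / 3)) = (γ ^ 2 + 1) * (2 * γ - 1) / (2 * γ ^ 3) := by
  have hsq : P ^ 2 + q ^ 2 = min P q ^ 2 + max P q ^ 2 := by
    rcases le_total P q with h | h <;> simp [h, add_comm]
  have hmul : P ^ 2 / 3 * (q ^ 2 / 3) = (min P q * max P q) ^ 2 / 9 := by
    rw [min_mul_max]
    ring
  have hm : 0 < min P q := lt_min hP hq
  have hM : 0 < max P q := hP.trans_le (le_max_left P q)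
  rw [hγ, max_div_div_eq_max_div_min hP hq, hsq, hmul]
  field [hm, hM]

theorem uniform_linear_model_variance_ratio_general
    {Ω : Type*} [MeasurableSpace Ω] {μ : Measure Ω} [IsProbabilityMeasure μ]
    {X₁ ε₂ : Ω → ℝ} (hX₁ : Measurable X₁) (hε₂ : Measurable ε₂) (hindep : IndepFun X₁ ε₂ μ)
    {c p d q : ℝ} (hu₁ : IsUniform X₁ (closedBall c p) μ) (hu₂ : IsUniform ε₂ (closedBall d q) μ)
    {β : ℝ} (hβ : β ≠ 0) {X₂ : Ω → ℝ} (hX₂ : X₂ = fun ω ↦ β * X₁ ω + ε₂ ω)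
    {γ : ℝ} (hγ : γ = max (|β| * p / q) (q / (|β| * p))) :
    (∫ ω, Var[X₁; μ | MeasurableSpace.comap X₂ inferInstance] ω ∂μ) * Var[X₂; μ] /
      (Var[X₁; μ] * Var[ε₂; μ]) = (γ ^ 2 + 1) * (2 * γ - 1) / (2 * γ ^ 3) := by
  have hp : 0 < p := radius_pos_of_isUniform_closedBall hX₁.aemeasurable hu₁
  have hq : 0 < q := radius_pos_of_isUniform_closedBall hε₂.aemeasurable hu₂
  have hβX₁ : Measurable fun ω ↦ β * X₁ ω := hX₁.const_mul β
  have hβindep : IndepFun (fun ω ↦ β * X₁ ω) ε₂ μ :=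
    hindep.comp (measurable_const_mul β) measurable_id
  have hβu := isUniform_const_mul_closedBall hβ hX₁.aemeasurable hu₁
  have hvar₁ : β ^ 2 * Var[X₁; μ] = (|β| * p) ^ 2 / 3 := by
    rw [← variance_const_mul, variance_of_isUniform_closedBall hβX₁.aemeasurable hβu]
  have hvarε : Var[ε₂; μ] = q ^ 2 / 3 := variance_of_isUniform_closedBall hε₂.aemeasurable hu₂
  have hvar₂ : Var[X₂; μ] = ((|β| * p) ^ 2 + q ^ 2) / 3 := by
    rw [hX₂, hβindep.variance_fun_add (memLp_of_isUniform_closedBall hβX₁.aemeasurable hβu 2)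
      (memLp_of_isUniform_closedBall hε₂.aemeasurable hu₂ 2), variance_const_mul, hvar₁, hvarε]
    ring
  have hcondVar : β ^ 2 * ∫ ω, Var[X₁; μ | MeasurableSpace.comap X₂ inferInstance] ω ∂μ =
      min (|β| * p) q ^ 2 * (2 * max (|β| * p) q - min (|β| * p) q) / (6 * max (|β| * p) q) := by
    rw [← integral_condVar_add_of_isUniform_closedBall hε₂ hβX₁ hβindep.symm hu₂ hβu,
      ← integral_const_mul, hX₂]
    simp_rw [add_comm (ε₂ _)]
    exact integral_congr_ae (condVar_smul β X₁).symm
  rw [← min_max_variance_ratio_eq (by positivity) hq hγ, ← hcondVar, ← hvar₁, hvar₂, hvarε]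
  field

/-- For the linear model `X₂ = β X₁ + ε₂` with `X₁, ε₂` i.i.d. uniform on `[-1,1]`
and `β ≠ 0`, the ratio `(E[Var(X₁ | X₂)] · Var(X₂)) / (Var(X₁) · Var(ε₂))` equals
`(γ² + 1)(2γ − 1) / (2γ³)` where `γ = max{|β|, 1/|β|}`. -/
theorem uniform_linear_model_variance_ratio
    {Ω : Type*} [MeasurableSpace Ω] (μ : Measure Ω) [IsProbabilityMeasure μ]
    (X₁ ε₂ : Ω → ℝ) (hX₁ : Measurable X₁) (hε₂ : Measurable ε₂)
    (hindep : IndepFun X₁ ε₂ μ)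
    (hu1 : Measure.map X₁ μ = (2 : ℝ≥0∞)⁻¹ • volume.restrict (Set.Icc (-1 : ℝ) 1))
    (hu2 : Measure.map ε₂ μ = (2 : ℝ≥0∞)⁻¹ • volume.restrict (Set.Icc (-1 : ℝ) 1))
    (β : ℝ) (hβ : β ≠ 0)
    (X₂ : Ω → ℝ) (hX₂ : X₂ = fun ω => β * X₁ ω + ε₂ ω)
    (γ : ℝ) (hγ : γ = max |β| (1 / |β|)) :
    (∫ ω, (μ[(fun ω' =>
          (X₁ ω' - (μ[X₁ | MeasurableSpace.comap X₂ Real.measurableSpace]) ω') ^ 2) |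
        MeasurableSpace.comap X₂ Real.measurableSpace]) ω ∂μ) * variance X₂ μ /
      (variance X₁ μ * variance ε₂ μ) =
      (γ ^ 2 + 1) * (2 * γ - 1) / (2 * γ ^ 3) := by
  have huniform : (volume (closedBall (0 : ℝ) 1))⁻¹ • volume.restrict (closedBall (0 : ℝ) 1) =
      (2 : ℝ≥0∞)⁻¹ • volume.restrict (Icc (-1) 1) := by
    simp [Real.closedBall_eq_Icc, one_add_one_eq_two]
  exact uniform_linear_model_variance_ratio_general hX₁ hε₂ hindep (hu1.trans huniform.symm)
    (hu2.trans huniform.symm) hβ hX₂ (by simpa using hγ)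
end

section
/- Let X_1 and ε_2 be independent random variables, each uniformly distributed on [−1,1], let β ≥ 1 be a real constant, and let X_2 = βX_1 + ε_2. Then E[(X_1 − E[X_1 | X_2])²] = (2β − 1)/(6β³). -/
open MeasureTheory ProbabilityTheory
open scoped ENNReal

/-!
Given `X₂ = y`, the variable `X₁` is uniform on the interval `(-1, 1) ∩ (y/β - 1/|β|, y/β + 1/|β|)`,
because the shear `(x, e) ↦ (β x + e, x)` preserves area. A uniform variable on an interval of
length `ℓ` has its mean at the midpoint and variance `ℓ² / 12`; weighting by the density `ℓ / 4` of
`X₂`, the expected conditional variance is `∫ ℓ(y)³ / 48 dy`, where `ℓ` is an explicit trapezoid.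
-/

lemma setIntegral_Ioo_sub_midpoint (a b : ℝ) : ∫ x in Set.Ioo a b, (x - (a + b) / 2) = 0 := by
  rcases le_or_gt a b with hab | hba
  · rw [← integral_Ioc_eq_integral_Ioo, ← intervalIntegral.integral_of_le hab,
      intervalIntegral.integral_comp_sub_right (fun x => x), integral_id]
    ring
  · simp [Set.Ioo_eq_empty hba.not_gt]

lemma setIntegral_Ioo_sub_midpoint_sq (a b : ℝ) :
    ∫ x in Set.Ioo a b, (x - (a + b) / 2) ^ 2 = max (b - a) 0 ^ 3 / 12 := by
  rcases le_or_gt a b with hab | hba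
  · rw [← integral_Ioc_eq_integral_Ioo, ← intervalIntegral.integral_of_le hab,
      intervalIntegral.integral_comp_sub_right (fun x => x ^ 2), integral_pow,
      max_eq_left (sub_nonneg.2 hab)]
    push_cast
    ring
  · simp [Set.Ioo_eq_empty hba.not_gt, max_eq_right (sub_nonpos.2 hba.le)]

section UniformBetweenGraphs

variable {Ω α E : Type*} [MeasurableSpace Ω] [MeasurableSpace α] [NormedAddCommGroup E]
  [NormedSpace ℝ E] {μ : Measure Ω} {ρ : Measure α} [SFinite ρ] {a b : α → ℝ} {s : Set α}
  {X : Ω → ℝ} {Y : Ω → α} {F : α × ℝ → E}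

lemma setIntegral_regionBetween (ha : Measurable a) (hb : Measurable b) (hs : MeasurableSet s)
    (hF : IntegrableOn F (regionBetween a b s) (ρ.prod volume)) :
    ∫ p in regionBetween a b s, F p ∂(ρ.prod volume) =
      ∫ y in s, (∫ x in Set.Ioo (a y) (b y), F (y, x)) ∂ρ := by
  have hregion := measurableSet_regionBetween ha hb hs
  rw [← integral_indicator hregion, integral_prod _ ((integrable_indicator_iff hregion).2 hF),
    ← integral_indicator hs]
  congr 1 with y
  by_cases hy : y ∈ s
  · rw [Set.indicator_of_mem hy, ← integral_indicator measurableSet_Ioo]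
    simp [Set.indicator, regionBetween, hy]
  · simp [Set.indicator, regionBetween, hy]

lemma setIntegral_preimage_eq_of_map_eq_restrict_regionBetween
    (ha : Measurable a) (hb : Measurable b) (hX : AEMeasurable X μ) (hY : Measurable Y)
    (hlaw : μ.map (fun ω => (Y ω, X ω)) =
      (ρ.prod volume).restrict (regionBetween a b Set.univ))
    (hF : StronglyMeasurable F) (hs : MeasurableSet s)
    (hint : Integrable (fun ω => F (Y ω, X ω)) μ) :
    ∫ ω in Y ⁻¹' s, F (Y ω, X ω) ∂μ = ∫ y in s, (∫ x in Set.Ioo (a y) (b y), F (y, x)) ∂ρ := by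
  have hYX : AEMeasurable (fun ω => (Y ω, X ω)) μ := hY.aemeasurable.prodMk hX
  have hstrip : MeasurableSet (Prod.fst ⁻¹' s : Set (α × ℝ)) := measurable_fst hs
  have hregion : Prod.fst ⁻¹' s ∩ regionBetween a b Set.univ = regionBetween a b s := by
    ext p
    simp [regionBetween]
  have hF_region : IntegrableOn F (regionBetween a b Set.univ) (ρ.prod volume) := by
    rw [IntegrableOn, ← hlaw]
    exact (integrable_map_measure hF.aestronglyMeasurable hYX).2 hint
  calc ∫ ω in Y ⁻¹' s, F (Y ω, X ω) ∂μ
      = ∫ p in Prod.fst ⁻¹' s, F p ∂μ.map (fun ω => (Y ω, X ω)) :=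
        (setIntegral_map hstrip hF.aestronglyMeasurable hYX).symm
    _ = ∫ p in regionBetween a b s, F p ∂(ρ.prod volume) := by
        rw [hlaw, Measure.restrict_restrict hstrip, hregion]
    _ = ∫ y in s, (∫ x in Set.Ioo (a y) (b y), F (y, x)) ∂ρ :=
        setIntegral_regionBetween ha hb hs
          (hF_region.mono_set (hregion ▸ Set.inter_subset_right))

variable [IsFiniteMeasure μ]

theorem condExp_comap_ae_eq_midpoint_of_map_eq_restrict_regionBetween
    (ha : Measurable a) (hb : Measurable b) (hX : Integrable X μ) (hY : Measurable Y)
    (hlaw : μ.map (fun ω => (Y ω, X ω)) =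
      (ρ.prod volume).restrict (regionBetween a b Set.univ))
    (hmid : Integrable (fun ω => (a (Y ω) + b (Y ω)) / 2) μ) :
    μ[X | MeasurableSpace.comap Y inferInstance] =ᵐ[μ] fun ω => (a (Y ω) + b (Y ω)) / 2 := by
  have hmid_meas : Measurable fun y => (a y + b y) / 2 := (ha.add hb).div_const 2
  refine (ae_eq_condExp_of_forall_setIntegral_eq hY.comap_le hX (fun _ _ _ => hmid.integrableOn)
    ?_ (hmid_meas.comp (comap_measurable Y)).aestronglyMeasurable).symm
  rintro _ ⟨s, hs, rfl⟩ -
  have hresidual : ∫ ω in Y ⁻¹' s, (X ω - (a (Y ω) + b (Y ω)) / 2) ∂μ = 0 := by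
    rw [setIntegral_preimage_eq_of_map_eq_restrict_regionBetween
      (F := fun p => p.2 - (a p.1 + b p.1) / 2) ha hb hX.aemeasurable hY hlaw
      (by fun_prop) hs (hX.sub hmid)]
    simp only [setIntegral_Ioo_sub_midpoint, integral_zero]
  rw [integral_sub hX.integrableOn hmid.integrableOn] at hresidual
  exact (sub_eq_zero.1 hresidual).symm

theorem integral_sub_condExp_sq_of_map_eq_restrict_regionBetween
    (ha : Measurable a) (hb : Measurable b) (hX : MemLp X 2 μ) (hY : Measurable Y)
    (hlaw : μ.map (fun ω => (Y ω, X ω)) =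
      (ρ.prod volume).restrict (regionBetween a b Set.univ))
    (hmid : Integrable (fun ω => (a (Y ω) + b (Y ω)) / 2) μ) :
    ∫ ω, (X ω - (μ[X | MeasurableSpace.comap Y inferInstance]) ω) ^ 2 ∂μ =
      ∫ y, max (b y - a y) 0 ^ 3 / 12 ∂ρ := by
  have hcond := condExp_comap_ae_eq_midpoint_of_map_eq_restrict_regionBetween ha hb
    (hX.integrable one_le_two) hY hlaw hmid
  have hmid_memLp : MemLp (fun ω => (a (Y ω) + b (Y ω)) / 2) 2 μ :=
    (memLp_congr_ae hcond).1 (hX.condExp one_le_two)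
  calc ∫ ω, (X ω - (μ[X | MeasurableSpace.comap Y inferInstance]) ω) ^ 2 ∂μ
      = ∫ ω, (X ω - (a (Y ω) + b (Y ω)) / 2) ^ 2 ∂μ := by
        refine integral_congr_ae ?_
        filter_upwards [hcond] with ω hω
        rw [hω]
    _ = ∫ y, (∫ x in Set.Ioo (a y) (b y), (x - (a y + b y) / 2) ^ 2) ∂ρ := by
        simpa only [Set.preimage_univ, setIntegral_univ] using
          setIntegral_preimage_eq_of_map_eq_restrict_regionBetween
            (F := fun p => (p.2 - (a p.1 + b p.1) / 2) ^ 2) ha hb hX.aemeasurable hY hlaw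
            (by fun_prop) MeasurableSet.univ (hX.sub hmid_memLp).integrable_sq
    _ = ∫ y, max (b y - a y) 0 ^ 3 / 12 ∂ρ := by
        simp only [setIntegral_Ioo_sub_midpoint_sq]

end UniformBetweenGraphs

lemma measurePreserving_shear (β : ℝ) :
    MeasurePreserving (fun p : ℝ × ℝ => (β * p.1 + p.2, p.1)) := by
  have hskew : MeasurePreserving (fun p : ℝ × ℝ => (p.1, β * p.1 + p.2)) :=
    (MeasurePreserving.id volume).skew_product (g := fun x e => β * x + e) (by fun_prop)
      (Filter.Eventually.of_forall fun _ => map_add_left_eq_self _ _)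
  exact Measure.measurePreserving_swap.comp hskew

lemma map_linear_prodMk_eq_of_indepFun {Ω : Type*} [MeasurableSpace Ω] {μ : Measure Ω}
    [IsFiniteMeasure μ] {X ε : Ω → ℝ} {c d : ℝ≥0∞} {I J : Set ℝ} (hX : AEMeasurable X μ)
    (hε : AEMeasurable ε μ) (hindep : IndepFun X ε μ) (hI : MeasurableSet I)
    (hJ : MeasurableSet J) (hlawX : μ.map X = c • volume.restrict I)
    (hlawε : μ.map ε = d • volume.restrict J) (β : ℝ) :
    μ.map (fun ω => (β * X ω + ε ω, X ω)) =
      (((c * d) • volume).prod volume).restrict {p | p.2 ∈ I ∧ p.1 - β * p.2 ∈ J} := by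
  have hshear := measurePreserving_shear β
  have himage : MeasurableSet {p : ℝ × ℝ | p.2 ∈ I ∧ p.1 - β * p.2 ∈ J} :=
    (measurable_snd hI).inter ((measurable_fst.sub (measurable_snd.const_mul β)) hJ)
  have hpreimage : (fun p : ℝ × ℝ => (β * p.1 + p.2, p.1)) ⁻¹'
      {p | p.2 ∈ I ∧ p.1 - β * p.2 ∈ J} = I ×ˢ J := by
    ext p
    simp
  calc μ.map (fun ω => (β * X ω + ε ω, X ω))
      = (μ.map fun ω => (X ω, ε ω)).map (fun p => (β * p.1 + p.2, p.1)) :=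
        (AEMeasurable.map_map_of_aemeasurable hshear.measurable.aemeasurable (hX.prodMk hε)).symm
    _ = (c * d) • ((volume.prod volume).restrict (I ×ˢ J)).map
          (fun p => (β * p.1 + p.2, p.1)) := by
        rw [hindep.map_prod_eq_prod_map_map hX hε, hlawX, hlawε, Measure.prod_smul_left,
          Measure.prod_smul_right, smul_smul, Measure.prod_restrict, Measure.map_smul]
    _ = (((c * d) • volume).prod volume).restrict {p | p.2 ∈ I ∧ p.1 - β * p.2 ∈ J} := by
        rw [← hpreimage, ← Measure.volume_eq_prod, (hshear.restrict_preimage himage).map_eq,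
          Measure.prod_smul_left, Measure.restrict_smul, Measure.volume_eq_prod]

/-- Left endpoint of the interval of those `x ∈ (-1, 1)` with `|y - β x| < 1`, the support of `X₁`
given `β X₁ + ε₂ = y`. At `β = 0` it is a junk value. -/
noncomputable def fiberLeft (β y : ℝ) : ℝ := max (-1) (y / β - |β|⁻¹)

/-- Right endpoint of the interval of those `x ∈ (-1, 1)` with `|y - β x| < 1`, the support of `X₁`
given `β X₁ + ε₂ = y`. At `β = 0` it is a junk value. -/
noncomputable def fiberRight (β y : ℝ) : ℝ := min 1 (y / β + |β|⁻¹)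

lemma measurable_fiberLeft (β : ℝ) : Measurable (fiberLeft β) := by
  unfold fiberLeft
  fun_prop

lemma measurable_fiberRight (β : ℝ) : Measurable (fiberRight β) := by
  unfold fiberRight
  fun_prop

lemma sub_mul_mem_Ioo_iff {β : ℝ} (hβ : β ≠ 0) (x y : ℝ) :
    y - β * x ∈ Set.Ioo (-1) 1 ↔ x ∈ Set.Ioo (y / β - |β|⁻¹) (y / β + |β|⁻¹) := by
  have hscale : |y - β * x| = |β| * |x - y / β| := by
    rw [← abs_mul, mul_sub, mul_div_cancel₀ y hβ, abs_sub_comm]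
  calc y - β * x ∈ Set.Ioo (-1) 1 ↔ |β| * |x - y / β| < 1 := by rw [← hscale, abs_lt, Set.mem_Ioo]
    _ ↔ |x - y / β| < |β|⁻¹ := by rw [← lt_inv_mul_iff₀ (abs_pos.2 hβ), mul_one]
    _ ↔ x ∈ Set.Ioo (y / β - |β|⁻¹) (y / β + |β|⁻¹) := by
        rw [abs_sub_lt_iff, sub_lt_iff_lt_add', sub_lt_comm, and_comm, Set.mem_Ioo]

lemma regionBetween_fiberLeft_fiberRight {β : ℝ} (hβ : β ≠ 0) :
    regionBetween (fiberLeft β) (fiberRight β) Set.univ =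
      {p | p.2 ∈ Set.Ioo (-1) 1 ∧ p.1 - β * p.2 ∈ Set.Ioo (-1) 1} := by
  ext ⟨y, x⟩
  simp only [regionBetween, fiberLeft, fiberRight, Set.mem_univ, true_and, Set.mem_ofPred_eq,
    sub_mul_mem_Ioo_iff hβ, ← Set.mem_inter_iff, Set.Ioo_inter_Ioo]

lemma min_add_sub_max_sub (r s t : ℝ) :
    min r (t + s) - max (-r) (t - s) = min (2 * min r s) (r + s - |t|) := by
  grind

lemma setIntegral_Ioi_max_min_sub_pow {w h : ℝ} (hw : 0 ≤ w) (hwh : w ≤ h) {n : ℕ}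
    (hn : n ≠ 0) :
    ∫ t in Set.Ioi 0, max (min w (h - t)) 0 ^ n = w ^ n * (h - w) + w ^ (n + 1) / (n + 1) := by
  have hcont : Continuous fun t => max (min w (h - t)) 0 ^ n := by fun_prop
  have hplateau : ∫ t in 0..(h - w), max (min w (h - t)) 0 ^ n = w ^ n * (h - w) := by
    rw [intervalIntegral.integral_congr (g := fun _ => w ^ n), intervalIntegral.integral_const,
      smul_eq_mul, sub_zero, mul_comm]
    intro t ht
    rw [Set.uIcc_of_le (sub_nonneg.2 hwh)] at ht
    simp only [min_eq_left (le_sub_comm.1 ht.2), max_eq_left hw]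
  have hslope : ∫ t in (h - w)..h, max (min w (h - t)) 0 ^ n = w ^ (n + 1) / (n + 1) := by
    rw [intervalIntegral.integral_congr (g := fun t => (h - t) ^ n),
      intervalIntegral.integral_comp_sub_left (fun x => x ^ n), integral_pow]
    · simp
    intro t ht
    rw [Set.uIcc_of_le (sub_le_self h hw)] at ht
    simp only [min_eq_right (sub_le_comm.1 ht.1), max_eq_left (sub_nonneg.2 ht.2)]
  have hvanish : ∀ t ∈ Set.Ioi 0 \ Set.Ioc 0 h, max (min w (h - t)) 0 ^ n = 0 := by
    rintro t ⟨ht, hth⟩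
    have hht : h ≤ t := (not_le.1 fun hle => hth ⟨ht, hle⟩).le
    rw [max_eq_right (min_le_of_right_le (sub_nonpos.2 hht)), zero_pow hn]
  rw [setIntegral_eq_of_subset_of_forall_sdiff_eq_zero measurableSet_Ioi
      Set.Ioc_subset_Ioi_self hvanish, ← intervalIntegral.integral_of_le (hw.trans hwh),
    ← intervalIntegral.integral_add_adjacent_intervals (b := h - w)
      (hcont.intervalIntegrable _ _) (hcont.intervalIntegrable _ _), hplateau, hslope]

lemma integral_fiber_length_pow_three {β : ℝ} (hβ : β ≠ 0) :
    ∫ y, max (fiberRight β y - fiberLeft β y) 0 ^ 3 =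
      8 * (2 * |β| + 2 - 3 * min |β| 1) / max |β| 1 ^ 3 := by
  set m := min 1 |β|⁻¹ with hm
  have hm_nonneg : 0 ≤ m := by positivity
  have hm_le : 2 * m ≤ 1 + |β|⁻¹ := by
    linarith [min_le_left 1 |β|⁻¹, min_le_right 1 |β|⁻¹]
  calc ∫ y, max (fiberRight β y - fiberLeft β y) 0 ^ 3
      = ∫ y, max (min (2 * m) (1 + |β|⁻¹ - |y / β|)) 0 ^ 3 := by
        simp only [fiberLeft, fiberRight, min_add_sub_max_sub, m]
    _ = |β| * (2 * ∫ t in Set.Ioi 0, max (min (2 * m) (1 + |β|⁻¹ - t)) 0 ^ 3) := by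
        rw [Measure.integral_comp_div (fun t => max (min (2 * m) (1 + |β|⁻¹ - |t|)) 0 ^ 3),
          integral_comp_abs (f := fun t => max (min (2 * m) (1 + |β|⁻¹ - t)) 0 ^ 3), smul_eq_mul]
    _ = |β| * (16 * m ^ 3 * (1 + |β|⁻¹) - 24 * m ^ 4) := by
        rw [setIntegral_Ioi_max_min_sub_pow (mul_nonneg zero_le_two hm_nonneg) hm_le three_ne_zero]
        push_cast
        ring
    _ = 8 * (2 * |β| + 2 - 3 * min |β| 1) / max |β| 1 ^ 3 := by
        have hβ_pos : 0 < |β| := abs_pos.2 hβ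
        rcases le_total |β| 1 with h | h
        · rw [hm, min_eq_left ((one_le_inv₀ hβ_pos).2 h), min_eq_left h, max_eq_right h]
          field_simp
          ring
        · rw [hm, min_eq_right (inv_le_one_of_one_le₀ h), min_eq_right h, max_eq_left h]
          field_simp
          ring

section UniformLinearModel

variable {Ω : Type*} [MeasurableSpace Ω] {μ : Measure Ω} [IsFiniteMeasure μ]

lemma memLp_of_map_eq_smul_restrict_Icc {X : Ω → ℝ} {c p : ℝ≥0∞} {a b : ℝ}
    (hX : AEMeasurable X μ) (hlaw : μ.map X = c • volume.restrict (Set.Icc a b)) :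
    MemLp X p μ := by
  have hmem : ∀ᵐ x ∂μ.map X, x ∈ Set.Icc a b := by
    rw [hlaw]
    exact Measure.ae_smul_measure (ae_restrict_mem measurableSet_Icc) c
  exact memLp_of_bounded (ae_of_ae_map hX hmem) hX.aestronglyMeasurable p

lemma integrable_fiber_midpoint {Y : Ω → ℝ} (hY : Integrable Y μ) (β : ℝ) :
    Integrable (fun ω => (fiberLeft β (Y ω) + fiberRight β (Y ω)) / 2) μ := by
  have hleft : Integrable (fun ω => fiberLeft β (Y ω)) μ :=
    (integrable_const (-1)).sup ((hY.div_const β).sub (integrable_const |β|⁻¹))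
  have hright : Integrable (fun ω => fiberRight β (Y ω)) μ :=
    (integrable_const 1).inf ((hY.div_const β).add (integrable_const |β|⁻¹))
  exact (hleft.add hright).div_const 2

lemma map_linear_prodMk_eq_restrict_regionBetween {X ε : Ω → ℝ}
    (hX : AEMeasurable X μ) (hε : AEMeasurable ε μ) (hindep : IndepFun X ε μ)
    (hlawX : μ.map X = (2 : ℝ≥0∞)⁻¹ • volume.restrict (Set.Icc (-1 : ℝ) 1))
    (hlawε : μ.map ε = (2 : ℝ≥0∞)⁻¹ • volume.restrict (Set.Icc (-1 : ℝ) 1))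
    {β : ℝ} (hβ : β ≠ 0) :
    μ.map (fun ω => (β * X ω + ε ω, X ω)) =
      (((4 : ℝ≥0∞)⁻¹ • volume).prod volume).restrict
        (regionBetween (fiberLeft β) (fiberRight β) Set.univ) := by
  have hquarter : (2 : ℝ≥0∞)⁻¹ * 2⁻¹ = 4⁻¹ := by
    rw [← ENNReal.mul_inv (by simp) (by simp)]
    norm_num
  rw [← restrict_Ioo_eq_restrict_Icc] at hlawX hlawε
  rw [regionBetween_fiberLeft_fiberRight hβ, ← hquarter]
  exact map_linear_prodMk_eq_of_indepFun hX hε hindep measurableSet_Ioo measurableSet_Ioo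
    hlawX hlawε β

end UniformLinearModel

theorem uniform_linear_model_residual_variance_of_one_le_general
    {Ω : Type*} [MeasurableSpace Ω] {μ : Measure Ω} [IsFiniteMeasure μ]
    {X₁ ε₂ : Ω → ℝ} (hX₁ : Measurable X₁) (hε₂ : Measurable ε₂)
    (hindep : IndepFun X₁ ε₂ μ)
    (hu1 : Measure.map X₁ μ = (2 : ℝ≥0∞)⁻¹ • volume.restrict (Set.Icc (-1 : ℝ) 1))
    (hu2 : Measure.map ε₂ μ = (2 : ℝ≥0∞)⁻¹ • volume.restrict (Set.Icc (-1 : ℝ) 1))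
    {β : ℝ} (hβ : β ≠ 0) :
    ∫ ω, (X₁ ω - (μ[X₁ | MeasurableSpace.comap (fun ω => β * X₁ ω + ε₂ ω)
        Real.measurableSpace]) ω) ^ 2 ∂μ =
      (2 * |β| + 2 - 3 * min |β| 1) / (6 * max |β| 1 ^ 3) := by
  have hX₁_memLp : MemLp X₁ 2 μ := memLp_of_map_eq_smul_restrict_Icc hX₁.aemeasurable hu1
  have hX₂_int : Integrable (fun ω => β * X₁ ω + ε₂ ω) μ :=
    ((hX₁_memLp.integrable one_le_two).const_mul β).add
      (memLp_one_iff_integrable.1 (memLp_of_map_eq_smul_restrict_Icc hε₂.aemeasurable hu2))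
  have hlaw := map_linear_prodMk_eq_restrict_regionBetween hX₁.aemeasurable hε₂.aemeasurable
    hindep hu1 hu2 hβ
  rw [integral_sub_condExp_sq_of_map_eq_restrict_regionBetween (measurable_fiberLeft β)
    (measurable_fiberRight β) hX₁_memLp (by fun_prop) hlaw (integrable_fiber_midpoint hX₂_int β),
    integral_smul_measure, integral_div, integral_fiber_length_pow_three hβ, ENNReal.toReal_inv,
    ENNReal.toReal_ofNat, smul_eq_mul]
  ring

/-- For the linear model `X₂ = β X₁ + ε₂` with `X₁, ε₂` i.i.d. uniform on `[-1,1]`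
and `β ≥ 1`, the expected conditional variance `E[(X₁ − E[X₁ | X₂])²]` equals
`(2β − 1)/(6β³)`. -/
theorem uniform_linear_model_residual_variance_of_one_le
    {Ω : Type*} [MeasurableSpace Ω] (μ : Measure Ω) [IsProbabilityMeasure μ]
    (X₁ ε₂ : Ω → ℝ) (hX₁ : Measurable X₁) (hε₂ : Measurable ε₂)
    (hindep : IndepFun X₁ ε₂ μ)
    (hu1 : Measure.map X₁ μ = (2 : ℝ≥0∞)⁻¹ • volume.restrict (Set.Icc (-1 : ℝ) 1))
    (hu2 : Measure.map ε₂ μ = (2 : ℝ≥0∞)⁻¹ • volume.restrict (Set.Icc (-1 : ℝ) 1))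
    (β : ℝ) (hβ : 1 ≤ β)
    (X₂ : Ω → ℝ) (hX₂ : X₂ = fun ω => β * X₁ ω + ε₂ ω) :
    ∫ ω, (X₁ ω - (μ[X₁ | MeasurableSpace.comap X₂ Real.measurableSpace]) ω) ^ 2 ∂μ =
      (2 * β - 1) / (6 * β ^ 3) := by
  rw [hX₂, uniform_linear_model_residual_variance_of_one_le_general hX₁ hε₂ hindep hu1 hu2
    (zero_lt_one.trans_le hβ).ne', abs_of_nonneg (zero_le_one.trans hβ), min_eq_right hβ,
    max_eq_left hβ]
  ring
end

section
/- Let X_1 and ε_2 be independent random variables, each uniformly distributed on [−1,1], let β > 0, and let X_2 = βX_1 + ε_2. Define A = min{1, (X_2+1)/β} and B = max{−1, (X_2−1)/β}. Then almost surely E[X_1 | X_2] = (A + B)/2 and Var(X_1 | X_2) = (A − B)²/12; that is, conditionally on X_2, the variable X_1 has the conditional mean and conditional variance of a uniform distribution on [B, A]. -/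
open MeasureTheory ProbabilityTheory
open scoped ENNReal

/-!
The shear `(x, e) ↦ (β x + e, x)` preserves Lebesgue measure, so `(X₂, X₁)` is uniform on the
image of the square. Disintegrating a uniform law on a planar set over its first coordinate gives
the uniform law on each section, and the section at `y` is the interval with endpoints
`max (-1) ((y - 1) / β)` and `min 1 ((y + 1) / β)`. Hence the conditional distribution of `X₁`
given `X₂` is uniform on `[B, A]`, and its mean and variance are those of a uniform law. Since a
conditional distribution is a probability measure, `B < A` almost surely.
-/

section UniformLaws

variable {Ω E F : Type*} [MeasurableSpace Ω] [MeasurableSpace E] [MeasurableSpace F]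
  {P : Measure Ω} {μ : Measure E} {ν : Measure F}

lemma prod_cond_cond [SFinite μ] [SFinite ν] {s : Set E} {t : Set F}
    (hs : μ s ≠ ∞) (ht : ν t ≠ ∞) :
    (μ[|s]).prod (ν[|t]) = (μ.prod ν)[|s ×ˢ t] := by
  simp only [ProbabilityTheory.cond, Measure.prod_smul_left, Measure.prod_smul_right,
    Measure.prod_restrict, Measure.prod_prod, smul_smul]
  rw [ENNReal.mul_inv (Or.inr ht) (Or.inl hs), mul_comm]

lemma map_cond_preimage {e : E → F} (he : MeasurePreserving e μ ν) {D : Set F}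
    (hD : MeasurableSet D) : (μ[|e ⁻¹' D]).map e = ν[|D] := by
  rw [ProbabilityTheory.cond, Measure.map_smul, (he.restrict_preimage hD).map_eq,
    he.measure_preimage hD.nullMeasurableSet, ProbabilityTheory.cond]

lemma isUniform_comp_of_measurePreserving_s8 {X : Ω → E} (hX : AEMeasurable X P) {e : E → F}
    (he : MeasurePreserving e μ ν) {D : Set F} (hD : MeasurableSet D)
    (hunif : pdf.IsUniform X (e ⁻¹' D) P μ) : pdf.IsUniform (e ∘ X) D P ν := by
  rw [pdf.IsUniform, ← AEMeasurable.map_map_of_aemeasurable he.measurable.aemeasurable hX, hunif,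
    map_cond_preimage he hD]

lemma isUniform_prodMk_of_indepFun [IsFiniteMeasure P] [SFinite μ] [SFinite ν] {X : Ω → E}
    {Y : Ω → F} (hX : AEMeasurable X P) (hY : AEMeasurable Y P) (hXY : IndepFun X Y P)
    {s : Set E} {t : Set F} (hs : μ s ≠ ∞) (ht : ν t ≠ ∞) (hXs : pdf.IsUniform X s P μ)
    (hYt : pdf.IsUniform Y t P ν) :
    pdf.IsUniform (fun ω => (X ω, Y ω)) (s ×ˢ t) P (μ.prod ν) := by
  rw [pdf.IsUniform, (indepFun_iff_map_prod_eq_prod_map_map hX hY).1 hXY, hXs, hYt,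
    prod_cond_cond hs ht]

end UniformLaws

section SectionKernel

variable {Ω S E : Type*} [MeasurableSpace Ω] [MeasurableSpace S] [MeasurableSpace E]
  {P : Measure Ω} {ρ : Measure S} {ν : Measure E} [SFinite ν] {D : Set (S × E)}

/-- The kernel sending `y` to the uniform distribution, with respect to `ν`, on the section
`{x | (y, x) ∈ D}`. It vanishes at those `y` whose section has measure `0` or `∞`, so it is not
a Markov kernel in general. -/
noncomputable def uniformSectionKernel (ν : Measure E) [SFinite ν] (D : Set (S × E))
    (hD : MeasurableSet D) : Kernel S E where
  toFun y := ν[|Prod.mk y ⁻¹' D]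
  measurable' := by
    refine Measure.measurable_of_measurable_coe _ fun t ht => ?_
    simp only [cond_apply (measurable_prodMk_left hD)]
    exact (measurable_measure_prodMk_left hD).inv.mul
      (measurable_measure_prodMk_left (hD.inter (measurable_snd ht)))

instance isFiniteKernel_uniformSectionKernel (hD : MeasurableSet D) :
    IsFiniteKernel (uniformSectionKernel ν D hD) :=
  ⟨1, ENNReal.one_lt_top, fun y => prob_le_one (μ := ν[|Prod.mk y ⁻¹' D])⟩

lemma fst_restrict_prod (hD : MeasurableSet D) :
    ((ρ.prod ν).restrict D).fst = ρ.withDensity fun y => ν (Prod.mk y ⁻¹' D) := by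
  ext t ht
  rw [Measure.fst_apply ht, Measure.restrict_apply (measurable_fst ht),
    Measure.prod_apply ((measurable_fst ht).inter hD), withDensity_apply _ ht,
    ← lintegral_indicator ht]
  congr with y
  by_cases hy : y ∈ t <;> simp [hy, Set.preimage_preimage]

lemma restrict_prod_eq_fst_compProd_uniformSectionKernel [SFinite ρ] (hD : MeasurableSet D)
    (hfin : ρ.prod ν D ≠ ∞) :
    (ρ.prod ν).restrict D = ((ρ.prod ν).restrict D).fst ⊗ₘ uniformSectionKernel ν D hD := by
  ext T hT
  have hκT : Measurable fun y => uniformSectionKernel ν D hD y (Prod.mk y ⁻¹' T) :=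
    Kernel.measurable_kernel_prodMk_left hT
  rw [Measure.compProd_apply hT, fst_restrict_prod hD,
    lintegral_withDensity_eq_lintegral_mul _ (measurable_measure_prodMk_left hD) hκT,
    Measure.restrict_apply hT, Measure.prod_apply (hT.inter hD)]
  refine lintegral_congr_ae ?_
  filter_upwards [Measure.ae_measure_lt_top hD hfin] with y hy
  rw [Set.preimage_inter, Set.inter_comm, Pi.mul_apply, mul_comm]
  exact (cond_mul_eq_inter' (measurable_prodMk_left hD) hy.ne _).symm

lemma condDistrib_ae_eq_cond_section [IsFiniteMeasure P] [SFinite ρ] [StandardBorelSpace E]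
    [Nonempty E] {X : Ω → E} {Y : Ω → S} (hX : AEMeasurable X P) (hY : AEMeasurable Y P)
    (hD : MeasurableSet D) (hfin : ρ.prod ν D ≠ ∞)
    (hunif : pdf.IsUniform (fun ω => (Y ω, X ω)) D P (ρ.prod ν)) :
    ∀ᵐ ω ∂P, condDistrib X Y P (Y ω) = ν[|Prod.mk (Y ω) ⁻¹' D] := by
  refine ae_of_ae_map hY
    (condDistrib_ae_eq_of_measure_eq_compProd (κ := uniformSectionKernel ν D hD) Y hX ?_)
  rw [← Measure.fst_map_prodMk₀ (X := Y) hX, hunif, ProbabilityTheory.cond, Measure.fst,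
    Measure.map_smul, ← Measure.fst, Measure.compProd_smul_left,
    ← restrict_prod_eq_fst_compProd_uniformSectionKernel hD hfin]

end SectionKernel

section AdditiveNoise

variable {Ω E G : Type*} [AddGroup G] {φ : E → G} {s : Set E} {t : Set G}

/-- The set of pairs `(φ x + e, x)` of an observation and its signal, for signals `x ∈ s` and
noises `e ∈ t`. It is encoded by solving `y = φ x + e` for `e`, and the observation comes first
so that the sections at fixed observation are sets of signals. -/
def additiveNoiseSet (φ : E → G) (s : Set E) (t : Set G) : Set (G × E) :=
  {z | z.2 ∈ s ∧ -φ z.2 + z.1 ∈ t}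

lemma preimage_additiveNoiseSet :
    (fun p : E × G => (φ p.1 + p.2, p.1)) ⁻¹' additiveNoiseSet φ s t = s ×ˢ t := by
  ext p
  simp [additiveNoiseSet]

variable [MeasurableSpace E] [MeasurableSpace G] [MeasurableAdd₂ G]

lemma measurableSet_additiveNoiseSet [MeasurableNeg G] (hφ : Measurable φ) (hs : MeasurableSet s)
    (ht : MeasurableSet t) : MeasurableSet (additiveNoiseSet φ s t) :=
  (measurable_snd hs).inter <| (by fun_prop : Measurable fun z : G × E => -φ z.2 + z.1) ht

variable {μ : Measure E} {ν : Measure G} [SFinite μ] [SFinite ν] [ν.IsAddLeftInvariant]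

lemma measurePreserving_add_noise_swap (hφ : Measurable φ) :
    MeasurePreserving (fun p : E × G => (φ p.1 + p.2, p.1)) (μ.prod ν) (ν.prod μ) :=
  Measure.measurePreserving_swap.comp <|
    (MeasurePreserving.id μ).skew_product (g := fun x e => φ x + e) (by fun_prop)
      (Filter.Eventually.of_forall fun x => map_add_left_eq_self ν (φ x))

variable [MeasurableNeg G]

lemma prod_additiveNoiseSet (hφ : Measurable φ) (hs : MeasurableSet s) (ht : MeasurableSet t) :
    ν.prod μ (additiveNoiseSet φ s t) = μ s * ν t := by
  rw [← (measurePreserving_add_noise_swap hφ).measure_preimage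
    (measurableSet_additiveNoiseSet hφ hs ht).nullMeasurableSet, preimage_additiveNoiseSet,
    Measure.prod_prod]

variable [MeasurableSpace Ω] {P : Measure Ω} [IsFiniteMeasure P] {X : Ω → E} {ε : Ω → G}

lemma isUniform_additiveNoiseSet (hφ : Measurable φ) (hX : AEMeasurable X P)
    (hε : AEMeasurable ε P) (hXε : IndepFun X ε P) (hs : MeasurableSet s) (ht : MeasurableSet t)
    (hs_fin : μ s ≠ ∞) (ht_fin : ν t ≠ ∞) (hXs : pdf.IsUniform X s P μ)
    (hεt : pdf.IsUniform ε t P ν) :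
    pdf.IsUniform (fun ω => (φ (X ω) + ε ω, X ω)) (additiveNoiseSet φ s t) P (ν.prod μ) := by
  refine isUniform_comp_of_measurePreserving_s8 (hX.prodMk hε)
    (measurePreserving_add_noise_swap hφ) (measurableSet_additiveNoiseSet hφ hs ht) ?_
  rw [preimage_additiveNoiseSet]
  exact isUniform_prodMk_of_indepFun hX hε hXε hs_fin ht_fin hXs hεt

lemma condDistrib_add_noise_ae_eq_cond [StandardBorelSpace E] [Nonempty E]
    (hφ : Measurable φ) (hX : AEMeasurable X P) (hε : AEMeasurable ε P) (hXε : IndepFun X ε P)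
    (hs : MeasurableSet s) (ht : MeasurableSet t) (hs_fin : μ s ≠ ∞) (ht_fin : ν t ≠ ∞)
    (hXs : pdf.IsUniform X s P μ) (hεt : pdf.IsUniform ε t P ν) :
    ∀ᵐ ω ∂P, condDistrib X (fun ω => φ (X ω) + ε ω) P (φ (X ω) + ε ω) =
      μ[|s ∩ {x | -φ x + (φ (X ω) + ε ω) ∈ t}] :=
  condDistrib_ae_eq_cond_section (D := additiveNoiseSet φ s t) hX
    ((hφ.comp_aemeasurable hX).add hε) (measurableSet_additiveNoiseSet hφ hs ht)
    ((prod_additiveNoiseSet hφ hs ht).trans_ne (ENNReal.mul_ne_top hs_fin ht_fin))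
    (isUniform_additiveNoiseSet hφ hX hε hXε hs ht hs_fin ht_fin hXs hεt)

end AdditiveNoise

section ConditionalVariance

variable {Ω S : Type*} [MeasurableSpace Ω] [mS : MeasurableSpace S] {P : Measure Ω}
  [IsFiniteMeasure P]

lemma condVar_ae_eq_variance_condDistrib {X : Ω → ℝ} {Y : Ω → S} (hX : MemLp X 2 P)
    (hY : Measurable Y) :
    Var[X; P | mS.comap Y] =ᵐ[P] fun ω => Var[id; condDistrib X Y P (Y ω)] := by
  set m : S → ℝ := fun y => ∫ x, x ∂condDistrib X Y P y
  have hm : StronglyMeasurable m :=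
    StronglyMeasurable.integral_condDistrib (f := Prod.snd) measurable_snd.stronglyMeasurable
  have hmean : P[X | mS.comap Y] =ᵐ[P] fun ω => m (Y ω) :=
    condExp_ae_eq_integral_condDistrib' hY (hX.integrable one_le_two)
  have hdev : (X - P[X | mS.comap Y]) ^ 2 =ᵐ[P] fun ω => (X ω - m (Y ω)) ^ 2 := by
    filter_upwards [hmean] with ω hω
    simp [hω]
  have hint : Integrable (fun ω => (X ω - m (Y ω)) ^ 2) P :=
    (hX.sub (hX.condExp one_le_two)).integrable_sq.congr hdev
  calc Var[X; P | mS.comap Y]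
    _ =ᵐ[P] P[fun ω => (X ω - m (Y ω)) ^ 2 | mS.comap Y] := condExp_congr_ae hdev
    _ =ᵐ[P] fun ω => ∫ x, (x - m (Y ω)) ^ 2 ∂condDistrib X Y P (Y ω) :=
      condExp_prod_ae_eq_integral_condDistrib (f := fun z => (z.2 - m z.1) ^ 2) hY
        hX.aestronglyMeasurable.aemeasurable
        ((measurable_snd.sub (hm.measurable.comp measurable_fst)).pow_const 2).stronglyMeasurable
        hint
    _ = fun ω => Var[id; condDistrib X Y P (Y ω)] := by
      simp only [variance_eq_integral aemeasurable_id, id, m]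

end ConditionalVariance

section UniformInterval

variable {a b : ℝ}

lemma lt_of_isProbabilityMeasure_cond_Icc
    (h : IsProbabilityMeasure ((volume : Measure ℝ)[|Set.Icc a b])) : a < b := by
  by_contra! hba
  refine h.ne_zero _ (cond_eq_zero_of_meas_eq_zero ?_)
  simpa using hba

lemma integral_cond_Icc (hab : a < b) {F : Type*} [NormedAddCommGroup F] [NormedSpace ℝ F]
    (f : ℝ → F) : ∫ x, f x ∂volume[|Set.Icc a b] = (b - a)⁻¹ • ∫ x in a..b, f x := by
  rw [ProbabilityTheory.cond, integral_smul_measure, Real.volume_Icc, ENNReal.toReal_inv,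
    ENNReal.toReal_ofReal (sub_nonneg.2 hab.le), integral_Icc_eq_integral_Ioc,
    intervalIntegral.integral_of_le hab.le]

lemma integral_id_cond_Icc (hab : a < b) :
    ∫ x, x ∂volume[|Set.Icc a b] = (b + a) / 2 := by
  have hne : b - a ≠ 0 := (sub_pos.2 hab).ne'
  rw [integral_cond_Icc hab, integral_id, smul_eq_mul]
  field_simp
  ring

lemma variance_id_cond_Icc (hab : a < b) :
    Var[id; volume[|Set.Icc a b]] = (b - a) ^ 2 / 12 := by
  have hne : b - a ≠ 0 := (sub_pos.2 hab).ne'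
  simp only [variance_eq_integral aemeasurable_id, id, integral_id_cond_Icc hab]
  rw [integral_cond_Icc hab, intervalIntegral.integral_comp_sub_right (fun x => x ^ 2),
    integral_pow, smul_eq_mul]
  field_simp
  ring

lemma memLp_of_isUniform_Icc {Ω : Type*} [MeasurableSpace Ω] {P : Measure Ω} [IsFiniteMeasure P]
    {X : Ω → ℝ} (hX : AEMeasurable X P) (hunif : pdf.IsUniform X (Set.Icc a b) P) (p : ℝ≥0∞) :
    MemLp X p P := by
  refine memLp_of_bounded (a := a) (b := b) (ae_of_ae_map hX ?_) hX.aestronglyMeasurable p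
  rw [hunif]
  exact ae_cond_mem measurableSet_Icc

lemma isUniform_Icc_iff {Ω : Type*} [MeasurableSpace Ω] {P : Measure Ω} {X : Ω → ℝ} :
    pdf.IsUniform X (Set.Icc a b) P ↔
      P.map X = (ENNReal.ofReal (b - a))⁻¹ • volume.restrict (Set.Icc a b) := by
  rw [pdf.IsUniform, ProbabilityTheory.cond, Real.volume_Icc]

end UniformInterval

lemma Icc_inter_setOf_neg_mul_add_mem_Icc {K : Type*} [Field K] [LinearOrder K]
    [IsStrictOrderedRing K] {β : K} (hβ : 0 < β) (a b c d y : K) :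
    Set.Icc a b ∩ {x | -(β * x) + y ∈ Set.Icc c d} =
      Set.Icc (max a ((y - d) / β)) (min b ((y - c) / β)) := by
  have hnoise : {x | -(β * x) + y ∈ Set.Icc c d} = Set.Icc ((y - d) / β) ((y - c) / β) := by
    ext x
    rw [Set.mem_ofPred_eq, Set.mem_Icc, Set.mem_Icc, div_le_iff₀ hβ, le_div_iff₀ hβ]
    constructor <;> rintro ⟨h₁, h₂⟩ <;> constructor <;> linarith
  rw [hnoise, Set.Icc_inter_Icc]

theorem uniform_linear_model_conditional_mean_and_variance_general
    {Ω : Type*} [MeasurableSpace Ω] (μ : Measure Ω) [IsFiniteMeasure μ]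
    (X₁ ε₂ : Ω → ℝ) (hX₁ : Measurable X₁) (hε₂ : Measurable ε₂)
    (hindep : IndepFun X₁ ε₂ μ) (a b c d : ℝ)
    (hu1 : pdf.IsUniform X₁ (Set.Icc a b) μ) (hu2 : pdf.IsUniform ε₂ (Set.Icc c d) μ)
    (β : ℝ) (hβ : 0 < β)
    (X₂ : Ω → ℝ) (hX₂ : X₂ = fun ω => β * X₁ ω + ε₂ ω)
    (A B : Ω → ℝ)
    (hA : A = fun ω => min b ((X₂ ω - c) / β))
    (hB : B = fun ω => max a ((X₂ ω - d) / β)) :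
    (μ[X₁ | MeasurableSpace.comap X₂ Real.measurableSpace] =ᵐ[μ] fun ω => (A ω + B ω) / 2) ∧
      Var[X₁; μ | MeasurableSpace.comap X₂ Real.measurableSpace] =ᵐ[μ]
        fun ω => (A ω - B ω) ^ 2 / 12 := by
  have hX₂m : Measurable X₂ := hX₂ ▸ (hX₁.const_mul β).add hε₂
  have hlaw : ∀ᵐ ω ∂μ, condDistrib X₁ X₂ μ (X₂ ω) = volume[|Set.Icc (B ω) (A ω)] := by
    subst hX₂ hA hB
    simp only [← Icc_inter_setOf_neg_mul_add_mem_Icc hβ]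
    exact condDistrib_add_noise_ae_eq_cond (measurable_const_mul β) hX₁.aemeasurable
      hε₂.aemeasurable hindep measurableSet_Icc measurableSet_Icc measure_Icc_lt_top.ne
      measure_Icc_lt_top.ne hu1 hu2
  have hBA : ∀ᵐ ω ∂μ, B ω < A ω := by
    filter_upwards [hlaw] with ω hω
    exact lt_of_isProbabilityMeasure_cond_Icc (hω ▸ inferInstance)
  have hL2 : MemLp X₁ 2 μ := memLp_of_isUniform_Icc hX₁.aemeasurable hu1 2
  constructor
  · filter_upwards [condExp_ae_eq_integral_condDistrib' hX₂m (hL2.integrable one_le_two), hlaw,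
      hBA] with ω hmean hω hlt
    rw [hmean, hω, integral_id_cond_Icc hlt]
  · filter_upwards [condVar_ae_eq_variance_condDistrib hL2 hX₂m, hlaw, hBA] with ω hvar hω hlt
    rw [hvar, hω, variance_id_cond_Icc hlt]

/-- For the linear model `X₂ = β X₁ + ε₂` with `X₁, ε₂` i.i.d. uniform on `[-1,1]`
and `β > 0`, setting `A = min{1, (X₂+1)/β}` and `B = max{−1, (X₂−1)/β}`, one has
almost surely `E[X₁ | X₂] = (A + B)/2` and `Var(X₁ | X₂) = (A − B)²/12`, i.e. the
conditional mean and variance of a uniform distribution on `[B, A]`. -/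
theorem uniform_linear_model_conditional_mean_and_variance
    {Ω : Type*} [MeasurableSpace Ω] (μ : Measure Ω) [IsProbabilityMeasure μ]
    (X₁ ε₂ : Ω → ℝ) (hX₁ : Measurable X₁) (hε₂ : Measurable ε₂)
    (hindep : IndepFun X₁ ε₂ μ)
    (hu1 : Measure.map X₁ μ = (2 : ℝ≥0∞)⁻¹ • volume.restrict (Set.Icc (-1 : ℝ) 1))
    (hu2 : Measure.map ε₂ μ = (2 : ℝ≥0∞)⁻¹ • volume.restrict (Set.Icc (-1 : ℝ) 1))
    (β : ℝ) (hβ : 0 < β)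
    (X₂ : Ω → ℝ) (hX₂ : X₂ = fun ω => β * X₁ ω + ε₂ ω)
    (A B : Ω → ℝ)
    (hA : A = fun ω => min 1 ((X₂ ω + 1) / β))
    (hB : B = fun ω => max (-1) ((X₂ ω - 1) / β)) :
    (μ[X₁ | MeasurableSpace.comap X₂ Real.measurableSpace] =ᵐ[μ]
        fun ω => (A ω + B ω) / 2) ∧
    (μ[(fun ω =>
          (X₁ ω - (μ[X₁ | MeasurableSpace.comap X₂ Real.measurableSpace]) ω) ^ 2) |
        MeasurableSpace.comap X₂ Real.measurableSpace] =ᵐ[μ]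
        fun ω => (A ω - B ω) ^ 2 / 12) := by
  have hlen : (2 : ℝ≥0∞) = ENNReal.ofReal (1 - -1) := by norm_num
  rw [hlen, ← isUniform_Icc_iff] at hu1 hu2
  simp only [← sub_neg_eq_add] at hA
  exact uniform_linear_model_conditional_mean_and_variance_general μ X₁ ε₂ hX₁ hε₂ hindep
    (-1) 1 (-1) 1 hu1 hu2 β hβ X₂ hX₂ A B hA hB
end

section
/- Let X_1 and ε_2 be independent integrable random variables, let β ≠ 0, suppose that βX_1 and ε_2 have the same distribution, and let X_2 = βX_1 + ε_2. Then almost surely E[X_1 | X_2] = X_2/(2β); that is, the conditional expectation of X_1 given X_2 is linear in X_2. -/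
open MeasureTheory ProbabilityTheory

/-!
An independent, identically distributed pair `(X, Y)` is exchangeable, so `(X, X + Y)` and
`(Y, X + Y)` have the same law, which forces `E[X | X + Y] = E[Y | X + Y]`. The two sides add up
to `E[X + Y | X + Y] = X + Y`, so each of them is `(X + Y) / 2`. The theorem is the case
`X = β X₁`, `Y = ε₂`, divided by `β`.
-/

section

variable {Ω Ω' E F : Type*} [MeasurableSpace Ω] [MeasurableSpace Ω'] [mF : MeasurableSpace F]
  [NormedAddCommGroup E] [NormedSpace ℝ E] [mE : MeasurableSpace E] [BorelSpace E]
  {μ : Measure Ω} {ν : Measure Ω'}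

lemma setIntegral_preimage_eq_of_identDistrib_prodMk {X : Ω → E} {Z : Ω → F} {Y : Ω' → E}
    {W : Ω' → F} (h : IdentDistrib (fun ω => (X ω, Z ω)) (fun ω => (Y ω, W ω)) μ ν)
    {B : Set F} (hB : MeasurableSet B) :
    ∫ ω in Z ⁻¹' B, X ω ∂μ = ∫ ω in W ⁻¹' B, Y ω ∂ν := by
  have hZ : NullMeasurableSet (Z ⁻¹' B) μ := h.aemeasurable_fst.snd.nullMeasurableSet_preimage hB
  have hW : NullMeasurableSet (W ⁻¹' B) ν := h.aemeasurable_snd.snd.nullMeasurableSet_preimage hB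
  have hindicator : Measurable ((Prod.snd ⁻¹' B).indicator (Prod.fst : E × F → E)) :=
    measurable_fst.indicator (measurable_snd hB)
  rw [← integral_indicator₀ hZ, ← integral_indicator₀ hW]
  exact (h.comp hindicator).integral_eq

variable [CompleteSpace E]

lemma condExp_comap_ae_eq_of_identDistrib_prodMk {X Y : Ω → E} {Z : Ω → F} (hZ : Measurable Z)
    [SigmaFinite (μ.trim hZ.comap_le)] (hX : Integrable X μ)
    (h : IdentDistrib (fun ω => (X ω, Z ω)) (fun ω => (Y ω, Z ω)) μ μ) :
    μ[X | mF.comap Z] =ᵐ[μ] μ[Y | mF.comap Z] := by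
  have hY : Integrable Y μ := (h.comp measurable_fst).integrable_snd hX
  refine ae_eq_condExp_of_forall_setIntegral_eq hZ.comap_le hY
    (fun _ _ _ => integrable_condExp.integrableOn) ?_
    stronglyMeasurable_condExp.aestronglyMeasurable
  rintro _ ⟨B, hB, rfl⟩ -
  rw [setIntegral_condExp hZ.comap_le hX ⟨B, hB, rfl⟩]
  exact setIntegral_preimage_eq_of_identDistrib_prodMk h hB

variable [SecondCountableTopology E]

lemma condExp_comap_add_ae_eq_of_identDistrib_swap {X Y : Ω → E} (hXY : Measurable (X + Y))
    [SigmaFinite (μ.trim hXY.comap_le)] (hX : Integrable X μ)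
    (h : IdentDistrib (fun ω => (X ω, Y ω)) (fun ω => (Y ω, X ω)) μ μ) :
    μ[X | mE.comap (X + Y)] =ᵐ[μ] (2⁻¹ : ℝ) • (X + Y) := by
  have hY : Integrable Y μ := (h.comp measurable_fst).integrable_snd hX
  have hpair : IdentDistrib (fun ω => (X ω, (X + Y) ω)) (fun ω => (Y ω, (X + Y) ω)) μ μ := by
    simpa only [Function.comp_def, Pi.add_apply, add_comm (Y _)] using
      h.comp (measurable_fst.prodMk (measurable_fst.add measurable_snd))
  have hsum : μ[X + Y | mE.comap (X + Y)] = X + Y :=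
    condExp_of_stronglyMeasurable hXY.comap_le (comap_measurable _).stronglyMeasurable (hX.add hY)
  filter_upwards [condExp_comap_ae_eq_of_identDistrib_prodMk hXY hX hpair,
    condExp_add hX hY (mE.comap (X + Y))] with ω hsymm hadd
  rw [hsum, Pi.add_apply (μ[X | _]), ← hsymm, ← two_smul ℝ] at hadd
  rw [Pi.smul_apply, hadd, inv_smul_smul₀ two_ne_zero]

theorem condexp_linear_of_eq_distrib_general {X₁ ε₂ : Ω → E} {β : ℝ} (hβ : β ≠ 0)
    (hX₂ : Measurable (β • X₁ + ε₂)) [SigmaFinite (μ.trim hX₂.comap_le)] (hX₁ : Integrable X₁ μ)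
    (h : IdentDistrib (fun ω => ((β • X₁) ω, ε₂ ω)) (fun ω => (ε₂ ω, (β • X₁) ω)) μ μ) :
    μ[X₁ | mE.comap (β • X₁ + ε₂)] =ᵐ[μ] (2 * β)⁻¹ • (β • X₁ + ε₂) := by
  filter_upwards [condExp_comap_add_ae_eq_of_identDistrib_swap hX₂ (hX₁.smul β) h,
    condExp_smul β X₁ (mE.comap (β • X₁ + ε₂))] with ω hhalf hsmul
  rw [hsmul, Pi.smul_apply, ← eq_inv_smul_iff₀ hβ] at hhalf
  rw [hhalf, Pi.smul_apply, Pi.smul_apply, smul_smul, mul_inv_rev]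

end

/-- If `X₁` and `ε₂` are independent integrable random variables, `β ≠ 0`, `β X₁` has
the same distribution as `ε₂`, and `X₂ = β X₁ + ε₂`, then almost surely
`E[X₁ | X₂] = X₂ / (2β)`. -/
theorem condexp_linear_of_eq_distrib
    {Ω : Type*} [MeasurableSpace Ω] (μ : Measure Ω) [IsProbabilityMeasure μ]
    (X₁ ε₂ : Ω → ℝ) (hX₁ : Measurable X₁) (hε₂ : Measurable ε₂)
    (hint₁ : Integrable X₁ μ) (hint₂ : Integrable ε₂ μ)
    (hindep : IndepFun X₁ ε₂ μ)
    (β : ℝ) (hβ : β ≠ 0)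
    (hdist : Measure.map (fun ω => β * X₁ ω) μ = Measure.map ε₂ μ)
    (X₂ : Ω → ℝ) (hX₂ : X₂ = fun ω => β * X₁ ω + ε₂ ω) :
    μ[X₁ | MeasurableSpace.comap X₂ Real.measurableSpace] =ᵐ[μ]
      fun ω => X₂ ω / (2 * β) := by
  subst hX₂
  have hβX₁ : Measurable (β • X₁) := hX₁.const_smul β
  have hident : IdentDistrib (β • X₁) ε₂ μ μ := ⟨hβX₁.aemeasurable, hε₂.aemeasurable, hdist⟩
  have hindep' : IndepFun (β • X₁) ε₂ μ := hindep.comp (measurable_const_smul β) measurable_id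
  simp only [div_eq_inv_mul]
  exact condexp_linear_of_eq_distrib_general hβ (hβX₁.add hε₂) hint₁
    (hident.prodMk hident.symm hindep' hindep'.symm)
end
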